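/- For every m ≥ 1 and every tree T (a connected acyclic simple graph) on m vertices, there exists a map φ from the vertex set of T to the Hamming cube {0,1}^{m−1} such that for all vertices u, v, the Hamming distance between φ(u) and φ(v) equals the shortest-path distance d_T(u,v) in T. -/

import Mathlib

/-!
The coordinates of the cube are indexed by the `m - 1` edges of the tree. Fix a root `r`; the
coordinate of `φ u` at an edge `e` records whether `e` lies on the path from `r` to `u`. Crossing
an edge `s(u, w)` flips exactly the coordinate `s(u, w)` (`TreeCube.mem_edges_iff_of_adj`), so along
a walk the coordinate `e` is flipped once for each traversal of `e`
(`TreeCube.mem_edges_iff_even_count`). A shortest walk from `u` to `v` is a path and traverses each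
of its edges once, so `φ u` and `φ v` differ exactly on its edges, which number `T.dist u v`.
-/

namespace TreeCube

open SimpleGraph

variable {V : Type*} [DecidableEq V] {T : SimpleGraph V} {r : V}

/-- In a tree one of the two rooted paths to the ends of an edge extends the other by that edge, so
it is the only edge on which the two paths disagree. -/
lemma mem_edges_iff_of_adj (hT : T.IsAcyclic) (P : ∀ v, T.Walk r v) (hP : ∀ v, (P v).IsPath)
    {u w : V} (h : T.Adj u w) (e : Sym2 V) :
    (e ∈ (P u).edges ↔ e ∈ (P w).edges) ↔ s(u, w) ≠ e := by
  have key : ∀ {a b : V} (_ : T.Adj a b), a ∈ (P b).support →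
      ((e ∈ (P a).edges ↔ e ∈ (P b).edges) ↔ s(a, b) ≠ e) := by
    intro a b hab ha
    have hc := hT.path_concat (hP a) (hP b) hab ha
    have hn : s(a, b) ∉ (P a).edges := by
      intro hmem
      have hnd := (hP b).isTrail.edges_nodup
      rw [hc, Walk.edges_concat, List.concat_eq_append, List.nodup_append] at hnd
      exact hnd.2.2 _ hmem _ (by simp) rfl
    rw [hc, Walk.edges_concat]
    by_cases he : s(a, b) = e
    · subst he; simp [hn]
    · simp [he, Ne.symm he]
  by_cases hu : u ∈ (P w).support
  · exact key h hu
  · have hw := hT.mem_support_of_ne_mem_support_of_adj_of_isPath (hP u) (hP w) h hu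
    rw [Iff.comm (a := e ∈ (P u).edges), Sym2.eq_swap]
    exact key h.symm hw

lemma mem_edges_iff_even_count (hT : T.IsAcyclic) (P : ∀ v, T.Walk r v)
    (hP : ∀ v, (P v).IsPath) {u v : V} (p : T.Walk u v) (e : Sym2 V) :
    (e ∈ (P u).edges ↔ e ∈ (P v).edges) ↔ Even (p.edges.count e) := by
  induction p with
  | nil => simp
  | cons h p ih =>
    have hs := mem_edges_iff_of_adj hT P hP h e
    rw [Walk.edges_cons, List.count_cons]
    simp only [beq_iff_eq]
    split_ifs with he
    · rw [Nat.even_add_one, ← ih]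
      tauto
    · rw [add_zero, ← ih]
      tauto

end TreeCube

/-- Every tree on `m ≥ 1` vertices embeds isometrically into the Hamming cube `{0,1}^(m-1)`:
there is a map `φ` from the vertices to binary vectors of length `m - 1` such that the
Hamming distance between images equals the shortest-path (graph) distance in the tree. -/
theorem tree_isometric_embedding_into_hamming_cube
    (m : ℕ) (hm : 1 ≤ m) (T : SimpleGraph (Fin m)) (hT : T.IsTree) :
    ∃ φ : Fin m → (Fin (m - 1) → Bool),
      ∀ u v : Fin m, hammingDist (φ u) (φ v) = T.dist u v := by
  classical
  choose P hP _ using hT.existsUnique_path ⟨0, hm⟩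
  have hcard : T.edgeFinset.card = m - 1 := by
    have := hT.card_edgeFinset
    rw [Fintype.card_fin] at this
    omega
  let E : T.edgeFinset ≃ Fin (m - 1) := T.edgeFinset.equivFinOfCardEq hcard
  refine ⟨fun u i => decide ((E.symm i : Sym2 (Fin m)) ∈ (P u).edges), fun u v => ?_⟩
  obtain ⟨p, hp, hlen⟩ := hT.connected.exists_path_of_dist u v
  have hnd := hp.isTrail.edges_nodup
  have hdiff : ∀ e, ¬ (e ∈ (P u).edges ↔ e ∈ (P v).edges) ↔ e ∈ p.edges := by
    intro e
    rw [TreeCube.mem_edges_iff_even_count hT.isAcyclic P hP p e]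
    by_cases he : e ∈ p.edges
    · simp [List.count_eq_one_of_mem hnd he, he]
    · simp [List.count_eq_zero_of_not_mem he, he]
  rw [← hlen, ← SimpleGraph.Walk.length_edges, ← List.toFinset_card_of_nodup hnd, hammingDist]
  refine Finset.card_bij (fun i _ => (E.symm i : Sym2 (Fin m))) ?_ ?_ ?_
  · intro i hi
    simpa [hdiff] using hi
  · intro i _ j _ hij
    exact E.symm.injective (Subtype.ext hij)
  · intro e he
    have he' : e ∈ p.edges := by simpa using he
    have heT : e ∈ T.edgeFinset := by simpa using p.edges_subset_edgeSet he'
    exact ⟨E ⟨e, heT⟩, by simpa [hdiff] using he', by simp⟩
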